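/- Propositional RPL is a conservative expansion of propositional Łukasiewicz logic: for every set Γ ∪ {φ} of formulas of the language of Ł (containing no rational constants other than 0 and 1), Γ ⊢_RPL φ if and only if Γ ⊢_Ł φ. -/

import Mathlib

/-- The rationals in the unit interval: indices of the truth constants of RPL,
and grades of graded formulas of GRPL. -/
abbrev UQ := {q : ℚ // 0 ≤ q ∧ q ≤ 1}

instance : Zero UQ := ⟨⟨0, by norm_num⟩⟩
instance : One UQ := ⟨⟨1, by norm_num⟩⟩

/-- Łukasiewicz negation on the rational unit interval: `¬q = 1 - q`. -/
def UQ.lneg (q : UQ) : UQ :=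
  ⟨1 - q.1, by obtain ⟨h0, h1⟩ := q.2; constructor <;> linarith⟩

/-- Łukasiewicz implication on the rational unit interval: `q → r = min 1 (1 - q + r)`. -/
def UQ.limp (q r : UQ) : UQ :=
  ⟨min 1 (1 - q.1 + r.1), by
    obtain ⟨hq0, hq1⟩ := q.2; obtain ⟨hr0, hr1⟩ := r.2
    exact ⟨le_min (by norm_num) (by linarith), min_le_left _ _⟩⟩

/-- Łukasiewicz strong conjunction on the rational unit interval:
`q ⊙ r = max 0 (q + r - 1)`. -/
def UQ.lmul (q r : UQ) : UQ :=
  ⟨max 0 (q.1 + r.1 - 1), by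
    obtain ⟨hq0, hq1⟩ := q.2; obtain ⟨hr0, hr1⟩ := r.2
    exact ⟨le_max_left _ _, max_le (by norm_num) (by linarith)⟩⟩

/-- Formulas of the language of RPL: propositional variables, a truth constant `q̄` for
each rational `q ∈ [0,1]`, negation and implication. -/
inductive Fml : Type
  | var : ℕ → Fml
  | const : UQ → Fml
  | neg : Fml → Fml
  | imp : Fml → Fml → Fml

/-- Strong conjunction, defined: `α ⊙ β := ¬(α → ¬β)`. -/
def Fml.odot (a b : Fml) : Fml := Fml.neg (a.imp b.neg)

/-- (Min-)conjunction, defined: `α ∧ β := α ⊙ (α → β)`. -/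
def Fml.conj (a b : Fml) : Fml := a.odot (a.imp b)

/-- Equivalence `α ≡ β`, the conjunction of the two implications. -/
def Fml.eqv (a b : Fml) : Fml := (a.imp b).conj (b.imp a)

/-- Instances of the axiom schemata (A1)-(A4) of Łukasiewicz logic Ł. -/
inductive IsLukAxiom : Fml → Prop
  | a1 (φ ψ : Fml) : IsLukAxiom (φ.imp (ψ.imp φ))
  | a2 (φ ψ χ : Fml) : IsLukAxiom ((φ.imp ψ).imp ((ψ.imp χ).imp (φ.imp χ)))
  | a3 (φ ψ : Fml) : IsLukAxiom (((φ.imp ψ).imp ψ).imp ((ψ.imp φ).imp φ))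
  | a4 (φ ψ : Fml) : IsLukAxiom ((φ.neg.imp ψ.neg).imp (ψ.imp φ))

/-- Axioms of Rational Pavelka logic RPL: the axioms of Ł together with the
bookkeeping axioms (with `1̄ ≡ 1` and `0̄ ≡ 0` rendered as the provability of `1̄`
and of `¬0̄`, since the basic language `{¬, →}` has no primitive truth constants). -/
inductive IsRPLAxiom : Fml → Prop
  | luk {φ : Fml} : IsLukAxiom φ → IsRPLAxiom φ
  | book_imp (q r : UQ) :
      IsRPLAxiom (((Fml.const q).imp (Fml.const r)).eqv (Fml.const (q.limp r)))
  | book_neg (q : UQ) : IsRPLAxiom ((Fml.const q).neg.eqv (Fml.const q.lneg))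
  | book_one : IsRPLAxiom (Fml.const 1)
  | book_zero : IsRPLAxiom (Fml.const 0).neg

/-- `L` is a proof in RPL from the theory `T`: every member of the list is an axiom of RPL,
a member of `T`, or follows from two earlier members by modus ponens. -/
def IsRPLProofFrom (T : Set Fml) (L : List Fml) : Prop :=
  ∀ i : Fin L.length, IsRPLAxiom (L.get i) ∨ L.get i ∈ T ∨
    ∃ j k : Fin L.length, j < i ∧ k < i ∧ L.get k = (L.get j).imp (L.get i)

/-- `T ⊢_RPL φ`: some proof in RPL from `T` has `φ` as its last element. -/
def RPLProv (T : Set Fml) (φ : Fml) : Prop :=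
  ∃ L : List Fml, IsRPLProofFrom T L ∧ L.getLast? = some φ

/-- The fuzzy set of axioms of GRPL: (A) instances of the axioms of Ł in grade 1;
(B) each constant `q̄` in grade `q`; (C) the bookkeeping axioms in grade 1;
(D) all formulas in grade 0. -/
inductive IsGRPLAxiom : UQ → Fml → Prop
  | luk {φ : Fml} : IsLukAxiom φ → IsGRPLAxiom 1 φ
  | const (q : UQ) : IsGRPLAxiom q (Fml.const q)
  | book_neg (q : UQ) : IsGRPLAxiom 1 ((Fml.const q).neg.eqv (Fml.const q.lneg))
  | book_imp (q r : UQ) :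
      IsGRPLAxiom 1 (((Fml.const q).imp (Fml.const r)).eqv (Fml.const (q.limp r)))
  | zero (φ : Fml) : IsGRPLAxiom 0 φ

/-- `L` is a graded proof in GRPL from the set `T` of graded formulas: every member is a
graded axiom of GRPL, a member of `T`, or follows from earlier members by graded modus
ponens (from `⟨q,φ⟩` and `⟨r,φ→ψ⟩` derive `⟨q⊙r,ψ⟩`) or by lifting (from `⟨q,φ⟩` derive
`⟨r→q, r̄→φ⟩`). -/
def IsGRPLProofFrom (T : Set (UQ × Fml)) (L : List (UQ × Fml)) : Prop :=
  ∀ i : Fin L.length, IsGRPLAxiom (L.get i).1 (L.get i).2 ∨ L.get i ∈ T ∨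
    (∃ j k : Fin L.length, j < i ∧ k < i ∧
      (L.get k).2 = (L.get j).2.imp (L.get i).2 ∧
      (L.get i).1 = UQ.lmul (L.get j).1 (L.get k).1) ∨
    (∃ j : Fin L.length, ∃ r : UQ, j < i ∧
      L.get i = (UQ.limp r (L.get j).1, (Fml.const r).imp (L.get j).2))

/-- `T ⊢_GRPL ⟨q,φ⟩`: some graded proof in GRPL from `T` has `⟨q,φ⟩` as its last element. -/
def GRPLProv (T : Set (UQ × Fml)) (p : UQ × Fml) : Prop :=
  ∃ L : List (UQ × Fml), IsGRPLProofFrom T L ∧ L.getLast? = some p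

/-- The set of graded hypotheses `⟨Γ(ψ), ψ⟩` determined by a fuzzy theory `Γ`. -/
def FuzzyThy (Γ : Fml → UQ) : Set (UQ × Fml) := {p | p.1 = Γ p.2}

/-- An assignment into the standard MV-algebra `[0,1]_Ł` takes values in `[0,1]`. -/
def IsAssignment (v : ℕ → ℝ) : Prop := ∀ n, v n ∈ Set.Icc (0 : ℝ) 1

/-- Evaluation of a formula in the standard MV-algebra `[0,1]_Ł`, with each rational
constant interpreted canonically. -/
noncomputable def eval (v : ℕ → ℝ) : Fml → ℝ
  | Fml.var n => v n
  | Fml.const q => (q.1 : ℝ)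
  | Fml.neg φ => 1 - eval v φ
  | Fml.imp φ ψ => min 1 (1 - eval v φ + eval v ψ)

/-- Formulas of the language of Ł: no rational constants other than `0̄` and `1̄`. -/
inductive IsLFml : Fml → Prop
  | var (n : ℕ) : IsLFml (Fml.var n)
  | zero : IsLFml (Fml.const 0)
  | one : IsLFml (Fml.const 1)
  | neg {φ : Fml} : IsLFml φ → IsLFml φ.neg
  | imp {φ ψ : Fml} : IsLFml φ → IsLFml ψ → IsLFml (φ.imp ψ)

/-- Provability in Łukasiewicz logic Ł (over the constant-free language expanded with
the constants `0̄`, `1̄`, governed by the provability of `1̄` and of `¬0̄`):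
axioms (A1)-(A4) and modus ponens. -/
inductive LukProv (T : Set Fml) : Fml → Prop
  | ax {φ : Fml} : IsLukAxiom φ → IsLFml φ → LukProv T φ
  | one : LukProv T (Fml.const 1)
  | negzero : LukProv T (Fml.const 0).neg
  | hyp {φ : Fml} : φ ∈ T → LukProv T φ
  | mp {φ ψ : Fml} : LukProv T φ → LukProv T (φ.imp ψ) → LukProv T ψ

/-!
Suppose that `φ` is not provable from `Γ` in Ł. By Zorn's lemma and proof by cases, `Γ` extends to
a linear theory `T` that still does not prove `φ`; its Lindenbaum algebra is an MV-chain in which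
the members of `Γ` take the value `1` and `φ` does not. By Chang's construction an MV-chain is the
unit interval `[0, u]` of a linearly ordered abelian group, and that group embeds into its divisible
hull, a rational vector space. There each constant `q̄` can be interpreted as `q • u`, and with this
reading all the axioms of RPL take the value `u`, so `φ` is not provable from `Γ` in RPL either.
-/

/-! ### MV-algebras -/

/-- MV-algebras in Mundici's signature: `x + y` is the truncated sum `x ⊕ y` and `xᶜ` the negation
`¬x`, so that the implication `x → y` is `xᶜ + y`. -/
class MVAlgebra (A : Type*) extends AddCommMonoid A, Compl A where
  protected compl_compl (x : A) : xᶜᶜ = x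
  add_compl_zero (x : A) : x + 0ᶜ = 0ᶜ
  compl_add_compl_add_comm (x y : A) : (xᶜ + y)ᶜ + y = (yᶜ + x)ᶜ + x

namespace MVAlgebra

variable {A : Type*} [MVAlgebra A] {x y z : A}

/-- The strong conjunction `x ⊙ y`, the De Morgan dual of the truncated sum. -/
scoped instance : Mul A := ⟨fun x y => (xᶜ + yᶜ)ᶜ⟩

scoped instance : One A := ⟨0ᶜ⟩

theorem mul_def (x y : A) : x * y = (xᶜ + yᶜ)ᶜ := rfl

theorem compl_zero : (0 : A)ᶜ = 1 := rfl

theorem compl_one : (1 : A)ᶜ = 0 := MVAlgebra.compl_compl 0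

theorem add_one (x : A) : x + 1 = 1 := add_compl_zero x

theorem one_add (x : A) : 1 + x = 1 := by rw [add_comm, add_one]

theorem compl_mul (x y : A) : (x * y)ᶜ = xᶜ + yᶜ := MVAlgebra.compl_compl _

theorem compl_add (x y : A) : (x + y)ᶜ = xᶜ * yᶜ := by
  simp only [mul_def, MVAlgebra.compl_compl]

theorem compl_injective : Function.Injective (compl : A → A) :=
  Function.LeftInverse.injective MVAlgebra.compl_compl

theorem compl_eq_one_iff : xᶜ = 1 ↔ x = 0 := compl_injective.eq_iff' compl_zero

scoped instance : CommMonoid A where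
  mul_assoc x y z := compl_injective <| by simp only [compl_mul, add_assoc]
  one_mul x := compl_injective <| by rw [compl_mul, compl_one, zero_add]
  mul_one x := compl_injective <| by rw [compl_mul, compl_one, add_zero]
  mul_comm x y := compl_injective <| by rw [compl_mul, compl_mul, add_comm]

theorem compl_add_self (x : A) : xᶜ + x = 1 := by
  simpa only [add_one, compl_one, zero_add] using (compl_add_compl_add_comm x 1).symm

theorem mul_compl_self (x : A) : x * xᶜ = 0 := by
  rw [mul_def, add_comm, compl_add_self, compl_one]

theorem compl_add_eq_one_iff_exists_add : xᶜ + y = 1 ↔ ∃ w, y = x + w := by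
  refine ⟨fun h => ⟨(yᶜ + x)ᶜ, ?_⟩, ?_⟩
  · rw [add_comm, ← compl_add_compl_add_comm, h, compl_one, zero_add]
  · rintro ⟨w, rfl⟩
    rw [← add_assoc, compl_add_self, one_add]

/-- The natural order of an MV-algebra: `x ≤ y` when the implication `x → y` equals `1`. -/
scoped instance : PartialOrder A where
  le x y := xᶜ + y = 1
  le_refl := compl_add_self
  le_trans x _ _ hxy hyz := by
    obtain ⟨v, rfl⟩ := compl_add_eq_one_iff_exists_add.1 hxy
    obtain ⟨w, rfl⟩ := compl_add_eq_one_iff_exists_add.1 hyz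
    exact compl_add_eq_one_iff_exists_add.2 ⟨v + w, add_assoc x v w⟩
  le_antisymm x y hxy hyx := by
    simpa only [hxy, hyx, compl_one, zero_add] using (compl_add_compl_add_comm x y).symm

theorem le_iff : x ≤ y ↔ xᶜ + y = 1 := Iff.rfl

theorem le_iff_exists_add : x ≤ y ↔ ∃ w, y = x + w := compl_add_eq_one_iff_exists_add

scoped instance : IsOrderedAddMonoid A where
  add_le_add_left x y h z := by
    obtain ⟨w, rfl⟩ := le_iff_exists_add.1 h
    exact le_iff_exists_add.2 ⟨w, add_right_comm x w z⟩

scoped instance : CanonicallyOrderedAdd A where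
  exists_add_of_le := le_iff_exists_add.1
  le_add_self _ y := le_iff_exists_add.2 ⟨y, add_comm _ _⟩
  le_self_add _ y := le_iff_exists_add.2 ⟨y, rfl⟩

theorem le_one (x : A) : x ≤ 1 := add_one _

theorem compl_le_compl (h : x ≤ y) : yᶜ ≤ xᶜ := by
  rwa [le_iff, MVAlgebra.compl_compl, add_comm]

scoped instance : IsOrderedMonoid A where
  mul_le_mul_left _ _ h z :=
    compl_le_compl <| add_le_add_left (compl_le_compl h) zᶜ

theorem mul_le_iff : x * y ≤ z ↔ x ≤ yᶜ + z := by
  rw [le_iff, le_iff, compl_mul, add_assoc]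

theorem mul_compl_add_le (x y : A) : x * (xᶜ + y) ≤ y := by
  rw [mul_comm, mul_le_iff]

theorem mul_le_self_left (x y : A) : x * y ≤ x := mul_le_of_le_one_right' (le_one y)

theorem mul_ne_one_of_left (hx : x ≠ 1) (y : A) : x * y ≠ 1 := fun h =>
  hx <| (le_one x).antisymm (h ▸ mul_le_self_left x y)

theorem compl_add_mul (h : x + y = 1) : yᶜ + x * y = x := by
  have := compl_add_compl_add_comm x yᶜ
  rwa [MVAlgebra.compl_compl, add_comm y x, h, compl_one, zero_add, add_comm] at this

theorem mul_compl_add (h : y ≤ x) : x * (xᶜ + y) = y :=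
  compl_injective <| by
    rw [compl_mul, compl_add, MVAlgebra.compl_compl, mul_comm, compl_add_mul h]

theorem mul_add_eq_add_mul (hxy : x + y = 1) (hyz : y + z = 1) : x * y + z = x + y * z :=
  calc x * y + z = x * y + (yᶜ + z * y) := by rw [compl_add_mul (add_comm y z ▸ hyz)]
    _ = yᶜ + x * y + y * z := by rw [mul_comm z y, add_left_comm, add_assoc]
    _ = x + y * z := by rw [compl_add_mul hxy]

theorem add_mul_eq_mul_add (hxy : x * y = 0) (hyz : y * z = 0) : (x + y) * z = x * (y + z) := by
  refine compl_injective ?_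
  simp only [compl_mul, compl_add]
  exact mul_add_eq_add_mul (by rw [← compl_mul, hxy, compl_zero])
    (by rw [← compl_mul, hyz, compl_zero])

theorem mul_add_eq_mul_add (hxy : x + y = 1) (hyz : y * z = 0) : x * y + z = x * (y + z) := by
  have hz : z ≤ yᶜ := by rw [le_iff, ← compl_mul, mul_comm, hyz, compl_zero]
  have hle : x * y + z ≤ x :=
    calc x * y + z ≤ x * y + yᶜ := by gcongr
      _ = x := by rw [add_comm, compl_add_mul hxy]
  calc x * y + z = x * (xᶜ + (x * y + z)) := (mul_compl_add hle).symm
    _ = x * (xᶜ + y * x + z) := by rw [mul_comm y x, add_assoc]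
    _ = x * (y + z) := by rw [compl_add_mul (add_comm x y ▸ hxy)]

/-- The weak disjunction `x ∨ y`, that is `(x → y) → y`. -/
def join (x y : A) : A := (xᶜ + y)ᶜ + y

theorem join_comm (x y : A) : join x y = join y x := compl_add_compl_add_comm x y

theorem join_self (x : A) : join x x = x := by
  rw [join, compl_add_self, compl_one, zero_add]

theorem one_join (x : A) : join 1 x = 1 := by
  rw [join, compl_one, zero_add, compl_add_self]

theorem join_eq_one_iff : join x y = 1 ↔ xᶜ + y ≤ y := Iff.rfl

theorem join_compl_add_compl_add (x y : A) : join (xᶜ + y) (yᶜ + x) = 1 := by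
  set a := xᶜ + y with ha
  set b := yᶜ + x with hb
  rw [join_eq_one_iff, hb, ← mul_le_iff, ← hb, mul_comm]
  calc y * (aᶜ + b) = a * (aᶜ + y) * (aᶜ + b) := by rw [mul_compl_add le_add_self]
    _ = (aᶜ + y) * (a * (aᶜ + b)) := by ac_rfl
    _ ≤ (aᶜ + y) * b := by gcongr; exact mul_compl_add_le a b
    _ = (bᶜ + x) * b := by rw [ha, hb, compl_add_compl_add_comm]
    _ = x := by rw [mul_comm, mul_compl_add le_add_self]

theorem join_eq_one_of_compl_add (hx : join x z = 1) (hxy : join (xᶜ + y) z = 1) :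
    join y z = 1 := by
  rw [join_eq_one_iff] at *
  have hle : yᶜ + z ≤ (xᶜ + y)ᶜ + (xᶜ + z) := by
    rw [← mul_le_iff, add_comm xᶜ z, add_comm z, ← mul_le_iff]
    calc (yᶜ + z) * (xᶜ + y) * x = x * (xᶜ + y) * (yᶜ + z) := by ac_rfl
      _ ≤ y * (yᶜ + z) := by gcongr; exact mul_compl_add_le x y
      _ ≤ z := mul_compl_add_le y z
  calc yᶜ + z ≤ (xᶜ + y)ᶜ + (xᶜ + z) := hle
    _ ≤ (xᶜ + y)ᶜ + z := by gcongr
    _ ≤ z := hxy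

end MVAlgebra

open scoped MVAlgebra

/-- Nontrivial linearly ordered MV-algebras. -/
class MVChain (A : Type*) extends MVAlgebra A, Nontrivial A where
  protected le_total (x y : A) : x ≤ y ∨ y ≤ x

/-! ### Chang's ordered group of an MV-chain -/

namespace MVChain

open MVAlgebra

variable {A : Type*} [MVChain A] {x y : A}

noncomputable scoped instance : LinearOrder A where
  le_total := MVChain.le_total
  toDecidableLE := Classical.decRel _

scoped instance : NeZero (1 : A) where
  out h := by
    have eq_one (x : A) : x = 1 := by rw [← add_zero x, ← h, add_one]
    obtain ⟨x, y, hxy⟩ := exists_pair_ne A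
    exact hxy ((eq_one x).trans (eq_one y).symm)

theorem mul_eq_zero_of_add_ne_one (h : x + y ≠ 1) : x * y = 0 := by
  have hx : x ≤ yᶜ := (MVChain.le_total x yᶜ).resolve_right fun hle =>
    h <| by rw [le_iff, MVAlgebra.compl_compl] at hle; rwa [add_comm]
  rw [← compl_eq_one_iff, compl_mul]
  exact hx

end MVChain

open scoped MVChain

/-- Chang's group of an MV-chain `A`: the pair `(n, a)` with `n : ℤ` and `a ∈ A`, `a ≠ 1`, stands
for `n` units plus `a`, and two fractional parts whose truncated sum is `1` produce a carry. -/
@[ext]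
structure ChangGroup (A : Type*) [MVChain A] where
  floor : ℤ
  fract : A
  fract_ne_one : fract ≠ 1

namespace ChangGroup

open MVAlgebra MVChain

variable {A : Type*} [MVChain A] {p q r : ChangGroup A} {a b : A}

noncomputable instance : Add (ChangGroup A) where
  add p q :=
    if h : p.fract + q.fract = 1 then
      ⟨p.floor + q.floor + 1, p.fract * q.fract, mul_ne_one_of_left p.fract_ne_one _⟩
    else ⟨p.floor + q.floor, p.fract + q.fract, h⟩

instance : Zero (ChangGroup A) := ⟨⟨0, 0, zero_ne_one⟩⟩

noncomputable instance : Neg (ChangGroup A) where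
  neg p :=
    if h : p.fract = 0 then ⟨-p.floor, 0, zero_ne_one⟩
    else ⟨-p.floor - 1, p.fractᶜ, mt compl_eq_one_iff.1 h⟩

theorem floor_zero : (0 : ChangGroup A).floor = 0 := rfl

theorem fract_zero : (0 : ChangGroup A).fract = 0 := rfl

theorem floor_add (p q : ChangGroup A) :
    (p + q).floor = p.floor + q.floor + if p.fract + q.fract = 1 then 1 else 0 := by
  change ChangGroup.floor (dite _ _ _) = _
  split_ifs
  · rfl
  · exact (add_zero _).symm

theorem fract_add (p q : ChangGroup A) :
    (p + q).fract =
      if p.fract + q.fract = 1 then p.fract * q.fract else p.fract + q.fract := by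
  change ChangGroup.fract (dite _ _ _) = _
  split_ifs <;> rfl

protected theorem add_comm (p q : ChangGroup A) : p + q = q + p := by
  ext
  · rw [floor_add, floor_add, add_comm p.fract, add_comm p.floor]
  · rw [fract_add, fract_add, add_comm p.fract, mul_comm p.fract]

theorem add_assoc_of_add_eq_one_of_add_eq_one (hpq : p.fract + q.fract = 1)
    (hqr : q.fract + r.fract = 1) : p + q + r = p + (q + r) := by
  have h := mul_add_eq_add_mul hpq hqr
  ext
  · simp only [floor_add, fract_add, hpq, hqr, h, if_true]
    ring
  · simp only [fract_add, hpq, hqr, h, if_true, mul_assoc]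

theorem add_assoc_of_add_ne_one_of_add_ne_one (hpq : p.fract + q.fract ≠ 1)
    (hqr : q.fract + r.fract ≠ 1) : p + q + r = p + (q + r) := by
  have h := add_mul_eq_mul_add (mul_eq_zero_of_add_ne_one hpq) (mul_eq_zero_of_add_ne_one hqr)
  ext
  · simp only [floor_add, fract_add, hpq, hqr, if_false, add_assoc]
    ring
  · simp only [fract_add, hpq, hqr, h, if_false, add_assoc]

theorem add_assoc_of_add_eq_one_of_add_ne_one (hpq : p.fract + q.fract = 1)
    (hqr : q.fract + r.fract ≠ 1) : p + q + r = p + (q + r) := by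
  have h := mul_add_eq_mul_add hpq (mul_eq_zero_of_add_ne_one hqr)
  have hne : p.fract * (q.fract + r.fract) ≠ 1 := mul_ne_one_of_left p.fract_ne_one _
  have heq : p.fract + (q.fract + r.fract) = 1 := by rw [← add_assoc, hpq, one_add]
  ext
  · simp only [floor_add, fract_add, hpq, hqr, h, hne, heq, if_true, if_false]
    ring
  · simp only [fract_add, hpq, hqr, h, hne, heq, if_true, if_false]

protected theorem add_assoc (p q r : ChangGroup A) : p + q + r = p + (q + r) := by
  by_cases hpq : p.fract + q.fract = 1 <;> by_cases hqr : q.fract + r.fract = 1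
  · exact add_assoc_of_add_eq_one_of_add_eq_one hpq hqr
  · exact add_assoc_of_add_eq_one_of_add_ne_one hpq hqr
  · rw [add_comm] at hpq hqr
    rw [ChangGroup.add_comm, ChangGroup.add_comm p q, ChangGroup.add_comm p,
      ChangGroup.add_comm q r]
    exact (add_assoc_of_add_eq_one_of_add_ne_one hqr hpq).symm
  · exact add_assoc_of_add_ne_one_of_add_ne_one hpq hqr

protected theorem zero_add (p : ChangGroup A) : 0 + p = p := by
  ext
  · simp only [floor_add, floor_zero, fract_zero, zero_add, p.fract_ne_one, if_false, add_zero]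
  · simp only [fract_add, fract_zero, zero_add, p.fract_ne_one, if_false]

protected theorem neg_add_cancel (p : ChangGroup A) : -p + p = 0 := by
  by_cases h : p.fract = 0
  · rw [show -p = ⟨-p.floor, 0, zero_ne_one⟩ from dif_pos h]
    ext <;> simp [floor_add, fract_add, floor_zero, fract_zero, h]
  · rw [show -p = ⟨-p.floor - 1, p.fractᶜ, mt compl_eq_one_iff.1 h⟩ from dif_neg h]
    ext
    · simp only [floor_add, floor_zero, compl_add_self, if_true]
      ring
    · simp only [fract_add, fract_zero, compl_add_self, if_true, mul_comm p.fractᶜ, mul_compl_self]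

noncomputable instance : AddCommGroup (ChangGroup A) where
  add_assoc := ChangGroup.add_assoc
  zero_add := ChangGroup.zero_add
  add_zero p := by rw [ChangGroup.add_comm, ChangGroup.zero_add]
  neg_add_cancel := ChangGroup.neg_add_cancel
  add_comm := ChangGroup.add_comm
  nsmul := nsmulRec
  zsmul := zsmulRec

noncomputable instance : LinearOrder (ChangGroup A) :=
  LinearOrder.lift' (fun p => toLex (p.floor, p.fract)) fun _ _ h =>
    ChangGroup.ext (congrArg (fun x => (ofLex x).1) h) (congrArg (fun x => (ofLex x).2) h)

theorem le_iff : p ≤ q ↔ p.floor < q.floor ∨ p.floor = q.floor ∧ p.fract ≤ q.fract :=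
  Prod.Lex.le_iff

protected theorem add_le_add_left (h : p ≤ q) (r : ChangGroup A) : p + r ≤ q + r := by
  have hmul (hle : p.fract ≤ q.fract) : p.fract * r.fract ≤ q.fract * r.fract := by gcongr
  have hadd (hle : p.fract ≤ q.fract) : p.fract + r.fract ≤ q.fract + r.fract := by gcongr
  have hcarry : p.fract * r.fract ≤ q.fract + r.fract :=
    (mul_comm p.fract r.fract ▸ mul_le_self_left r.fract p.fract).trans le_add_self
  rw [le_iff] at h ⊢
  simp only [floor_add, fract_add]
  rcases h with h | ⟨heq, hle⟩
  · split_ifs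
    · omega
    · rcases (show p.floor + 1 ≤ q.floor from h).lt_or_eq with hlt | heq
      · left; omega
      · right; exact ⟨by omega, hcarry⟩
    · left; omega
    · left; omega
  · split_ifs with hp hq hq
    · exact Or.inr ⟨by omega, hmul hle⟩
    · exact absurd ((le_one _).antisymm (hp ▸ hadd hle)) hq
    · left; omega
    · exact Or.inr ⟨by omega, hadd hle⟩

instance : IsOrderedAddMonoid (ChangGroup A) where
  add_le_add_left _ _ h r := ChangGroup.add_le_add_left h r

/-- The strong unit of Chang's group. -/
def unit : ChangGroup A := ⟨1, 0, zero_ne_one⟩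

/-- The embedding of an MV-chain into its Chang group, with image the interval `[0, unit]`. -/
noncomputable def ofMVChain (a : A) : ChangGroup A := if h : a = 1 then unit else ⟨0, a, h⟩

theorem ofMVChain_one : ofMVChain (1 : A) = unit := dif_pos rfl

theorem ofMVChain_of_ne_one (h : a ≠ 1) : ofMVChain a = ⟨0, a, h⟩ := dif_neg h

theorem ofMVChain_zero : ofMVChain (0 : A) = 0 := ofMVChain_of_ne_one zero_ne_one

theorem ofMVChain_injective : Function.Injective (ofMVChain : A → ChangGroup A) := by
  intro a b h
  by_cases ha : a = 1 <;> by_cases hb : b = 1 <;>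
    simp_all [ofMVChain, unit]

theorem ofMVChain_nonneg (a : A) : 0 ≤ ofMVChain a := by
  by_cases h : a = 1
  · rw [h, ofMVChain_one, le_iff]
    exact Or.inl Int.one_pos
  · rw [ofMVChain_of_ne_one h, le_iff]
    exact Or.inr ⟨rfl, zero_le (a := a)⟩

theorem ofMVChain_le_unit (a : A) : ofMVChain a ≤ unit := by
  by_cases h : a = 1
  · rw [h, ofMVChain_one]
  · rw [ofMVChain_of_ne_one h, le_iff]
    exact Or.inl Int.one_pos

theorem ofMVChain_compl (a : A) : ofMVChain aᶜ = unit - ofMVChain a := by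
  rw [eq_sub_iff_add_eq]
  by_cases h₀ : a = 0
  · rw [h₀, compl_zero, ofMVChain_one, ofMVChain_zero, add_zero]
  by_cases h₁ : a = 1
  · rw [h₁, compl_one, ofMVChain_one, ofMVChain_zero, zero_add]
  rw [ofMVChain_of_ne_one h₁, ofMVChain_of_ne_one (mt compl_eq_one_iff.1 h₀)]
  ext <;> simp [floor_add, fract_add, unit, compl_add_self, mul_comm aᶜ, mul_compl_self]

theorem ofMVChain_add (a b : A) :
    ofMVChain (a + b) = min unit (ofMVChain a + ofMVChain b) := by
  by_cases ha : a = 1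
  · rw [ha, one_add, ofMVChain_one, min_eq_left (le_add_of_nonneg_right (ofMVChain_nonneg b))]
  by_cases hb : b = 1
  · rw [hb, add_one, ofMVChain_one, min_eq_left (le_add_of_nonneg_left (ofMVChain_nonneg a))]
  rw [ofMVChain_of_ne_one ha, ofMVChain_of_ne_one hb]
  by_cases hab : a + b = 1
  · rw [hab, ofMVChain_one, eq_comm, min_eq_left_iff, le_iff]
    exact Or.inr (by simp [floor_add, fract_add, unit, hab])
  · have hsum : ofMVChain (a + b) = ⟨0, a, ha⟩ + ⟨0, b, hb⟩ := by
      rw [ofMVChain_of_ne_one hab]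
      ext <;> simp [floor_add, fract_add, hab]
    rw [← hsum, min_eq_right (ofMVChain_le_unit _)]

end ChangGroup

/-- A homomorphism from an MV-algebra to Mundici's MV-algebra `Γ(K, u)`, the interval `[0, u]` of
the ordered abelian group `K` with the truncated sum `min u (x + y)` and the negation `u - x`. -/
structure IsGammaHom {A K : Type*} [MVAlgebra A] [AddCommGroup K] [LinearOrder K] (u : K)
    (f : A → K) : Prop where
  map_zero : f 0 = 0
  map_compl (a : A) : f aᶜ = u - f a
  map_add (a b : A) : f (a + b) = min u (f a + f b)

namespace IsGammaHom

variable {A K L : Type*} [MVAlgebra A] [AddCommGroup K] [LinearOrder K] [AddCommGroup L]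
  [LinearOrder L] {u : K} {f : A → K}

theorem map_one (hf : IsGammaHom u f) : f 1 = u := by
  rw [← MVAlgebra.compl_zero, hf.map_compl, hf.map_zero, sub_zero]

theorem le_unit (hf : IsGammaHom u f) (a : A) : f a ≤ u := by
  rw [← add_zero a, hf.map_add]
  exact min_le_left _ _

theorem nonneg [IsOrderedAddMonoid K] (hf : IsGammaHom u f) (a : A) : 0 ≤ f a := by
  rw [← MVAlgebra.compl_compl a, hf.map_compl, sub_nonneg]
  exact hf.le_unit aᶜ

theorem comp (hf : IsGammaHom u f) (j : K →+o L) : IsGammaHom (j u) (j ∘ f) where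
  map_zero := by rw [Function.comp_apply, hf.map_zero, _root_.map_zero]
  map_compl a := by simp only [Function.comp_apply, hf.map_compl, map_sub]
  map_add a b := by
    simp only [Function.comp_apply, hf.map_add, (OrderHomClass.mono j).map_min, _root_.map_add]

end IsGammaHom

theorem ChangGroup.isGammaHom_ofMVChain {A : Type*} [MVChain A] :
    IsGammaHom (unit : ChangGroup A) ofMVChain where
  map_zero := ofMVChain_zero
  map_compl := ofMVChain_compl
  map_add := ofMVChain_add

theorem MVChain.exists_injective_isGammaHom (A : Type*) [MVChain A] :
    ∃ (u : DivisibleHull (ChangGroup A)) (f : A → DivisibleHull (ChangGroup A)),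
      Function.Injective f ∧ IsGammaHom u f :=
  ⟨_, _, DivisibleHull.coe_injective.comp ChangGroup.ofMVChain_injective,
    ChangGroup.isGammaHom_ofMVChain.comp (DivisibleHull.coeOrderAddMonoidHom _)⟩

/-! ### Soundness of RPL in divisible ordered groups -/

theorem isRPLProofFrom_iff_take {Γ : Set Fml} {L : List Fml} :
    IsRPLProofFrom Γ L ↔ ∀ i (hi : i < L.length),
      IsRPLAxiom L[i] ∨ L[i] ∈ Γ ∨ ∃ ψ ∈ L.take i, ψ.imp L[i] ∈ L.take i := by
  rw [IsRPLProofFrom, Fin.forall_iff]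
  refine forall₂_congr fun i hi => or_congr_right <| or_congr_right ⟨?_, ?_⟩
  · rintro ⟨j, k, hj, hk, h⟩
    exact ⟨L[j], List.mem_take_iff_getElem.2 ⟨j, lt_min hj j.2, rfl⟩,
      List.mem_take_iff_getElem.2 ⟨k, lt_min hk k.2, h⟩⟩
  · rintro ⟨ψ, hψ, hψφ⟩
    obtain ⟨j, hj, rfl⟩ := List.mem_take_iff_getElem.1 hψ
    obtain ⟨k, hk, h⟩ := List.mem_take_iff_getElem.1 hψφ
    rw [lt_min_iff] at hj hk
    exact ⟨⟨j, hj.2⟩, ⟨k, hk.2⟩, hj.1, hk.1, h⟩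

theorem isRPLProofFrom_concat_iff {Γ : Set Fml} {L : List Fml} {φ : Fml} :
    IsRPLProofFrom Γ (L ++ [φ]) ↔ IsRPLProofFrom Γ L ∧
      (IsRPLAxiom φ ∨ φ ∈ Γ ∨ ∃ ψ ∈ L, ψ.imp φ ∈ L) := by
  simp only [isRPLProofFrom_iff_take, List.length_append, List.length_singleton]
  constructor
  · refine fun h => ⟨fun i hi => ?_, ?_⟩
    · simpa only [List.getElem_append_left hi, List.take_append_of_le_length hi.le]
        using h i (hi.trans (Nat.lt_succ_self _))
    · simpa only [List.getElem_concat_length rfl, List.take_left]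
        using h L.length (Nat.lt_succ_self _)
  · rintro ⟨hL, hφ⟩ i hi
    rcases (Nat.le_of_lt_succ hi).lt_or_eq with hi | rfl
    · simpa only [List.getElem_append_left hi, List.take_append_of_le_length hi.le] using hL i hi
    · simpa only [List.getElem_concat_length rfl, List.take_left] using hφ

theorem IsRPLProofFrom.append {Γ : Set Fml} {L M : List Fml} (hL : IsRPLProofFrom Γ L)
    (hM : IsRPLProofFrom Γ M) : IsRPLProofFrom Γ (L ++ M) := by
  induction M using List.reverseRecOn with
  | nil => rwa [List.append_nil]
  | append_singleton M φ ih =>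
    obtain ⟨hM, hφ⟩ := isRPLProofFrom_concat_iff.1 hM
    rw [← List.append_assoc, isRPLProofFrom_concat_iff]
    refine ⟨ih hM, hφ.imp_right <| Or.imp_right ?_⟩
    rintro ⟨ψ, hψ, hψφ⟩
    exact ⟨ψ, List.mem_append_right L hψ, List.mem_append_right L hψφ⟩

namespace RPLProv

variable {Γ : Set Fml} {φ ψ : Fml}

theorem of_axiom_or_mem (h : IsRPLAxiom φ ∨ φ ∈ Γ) : RPLProv Γ φ :=
  ⟨[] ++ [φ], isRPLProofFrom_concat_iff.2
    ⟨fun i => i.elim0, h.imp_right Or.inl⟩, List.getLast?_concat⟩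

theorem mp (hφ : RPLProv Γ φ) (hφψ : RPLProv Γ (φ.imp ψ)) : RPLProv Γ ψ := by
  obtain ⟨L, hL, hLφ⟩ := hφ
  obtain ⟨M, hM, hMφψ⟩ := hφψ
  refine ⟨L ++ M ++ [ψ], isRPLProofFrom_concat_iff.2 ⟨hL.append hM, ?_⟩, List.getLast?_concat⟩
  exact Or.inr <| Or.inr ⟨φ, List.mem_append_left M (List.mem_of_getLast? hLφ),
    List.mem_append_right L (List.mem_of_getLast? hMφψ)⟩

theorem induction {P : Fml → Prop} (ax : ∀ χ, IsRPLAxiom χ → P χ) (hyp : ∀ χ ∈ Γ, P χ)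
    (mp : ∀ χ θ, P χ → P (χ.imp θ) → P θ) (h : RPLProv Γ φ) : P φ := by
  obtain ⟨L, hL, hφ⟩ := h
  suffices ∀ χ ∈ L, P χ from this φ (List.mem_of_getLast? hφ)
  clear hφ
  induction L using List.reverseRecOn with
  | nil => exact List.forall_mem_nil P
  | append_singleton L θ ih =>
    obtain ⟨hL, hθ⟩ := isRPLProofFrom_concat_iff.1 hL
    have hmem := ih hL
    refine List.forall_mem_append.2 ⟨hmem, List.forall_mem_singleton.2 ?_⟩
    rcases hθ with hθ | hθ | ⟨χ, hχ, hχθ⟩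
    · exact ax θ hθ
    · exact hyp θ hθ
    · exact mp χ θ (hmem χ hχ) (hmem _ hχθ)

end RPLProv

theorem LukProv.toRPLProv {Γ : Set Fml} {φ : Fml} (h : LukProv Γ φ) : RPLProv Γ φ := by
  induction h with
  | ax h _ => exact .of_axiom_or_mem (.inl (.luk h))
  | one => exact .of_axiom_or_mem (.inl .book_one)
  | negzero => exact .of_axiom_or_mem (.inl .book_zero)
  | hyp h => exact .of_axiom_or_mem (.inr h)
  | mp _ _ ih₁ ih₂ => exact ih₁.mp ih₂

section Soundness

variable {K : Type*} [AddCommGroup K] [LinearOrder K] [Module ℚ K] {u : K} {v : ℕ → K}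
  {φ ψ : Fml}

/-- Evaluation of RPL-formulas in the interval `[0, u]` of an ordered rational vector space, the
constant `q̄` being interpreted as `q • u`. The function `eval` is the case `K = ℝ`, `u = 1`. -/
def gammaEval (u : K) (v : ℕ → K) : Fml → K
  | .var n => v n
  | .const q => q.1 • u
  | .neg φ => u - gammaEval u v φ
  | .imp φ ψ => min u (u - gammaEval u v φ + gammaEval u v ψ)

theorem gammaEval_const_zero : gammaEval u v (.const 0) = 0 := zero_smul ℚ u

theorem gammaEval_const_one : gammaEval u v (.const 1) = u := one_smul ℚ u

variable [IsOrderedAddMonoid K]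

theorem gammaEval_imp_eq_unit_iff :
    gammaEval u v (φ.imp ψ) = u ↔ gammaEval u v φ ≤ gammaEval u v ψ := by
  rw [gammaEval, min_eq_left_iff]
  grind

theorem gammaEval_eqv_of_eq (hu : 0 ≤ u) (h : gammaEval u v φ = gammaEval u v ψ) :
    gammaEval u v (φ.eqv ψ) = u := by
  have hφψ : gammaEval u v (φ.imp ψ) = u := gammaEval_imp_eq_unit_iff.2 h.le
  have hψφ : gammaEval u v (ψ.imp φ) = u := gammaEval_imp_eq_unit_iff.2 h.ge
  simp only [Fml.eqv, Fml.conj, Fml.odot, gammaEval] at hφψ hψφ ⊢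
  simp only [hφψ, hψφ]
  grind

variable [IsOrderedModule ℚ K]

theorem gammaEval_mem_Icc (hu : 0 ≤ u) (hv : ∀ n, v n ∈ Set.Icc 0 u) (φ : Fml) :
    gammaEval u v φ ∈ Set.Icc 0 u := by
  induction φ with
  | var n => exact hv n
  | const q =>
    exact ⟨smul_nonneg q.2.1 hu, smul_le_of_le_one_left hu q.2.2⟩
  | neg φ ih => simp only [gammaEval, Set.mem_Icc] at ih ⊢; grind
  | imp φ ψ ihφ ihψ => simp only [gammaEval, Set.mem_Icc] at ihφ ihψ ⊢; grind

theorem gammaEval_of_isLukAxiom (hu : 0 ≤ u) (hv : ∀ n, v n ∈ Set.Icc 0 u) (h : IsLukAxiom φ) :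
    gammaEval u v φ = u := by
  cases h with
  | a1 φ ψ =>
    have hφ := gammaEval_mem_Icc hu hv φ
    have hψ := gammaEval_mem_Icc hu hv ψ
    rw [gammaEval_imp_eq_unit_iff]
    simp only [gammaEval, Set.mem_Icc] at hφ hψ ⊢
    grind
  | a2 φ ψ χ => rw [gammaEval_imp_eq_unit_iff]; simp only [gammaEval]; grind
  | a3 φ ψ => rw [gammaEval_imp_eq_unit_iff]; simp only [gammaEval]; grind
  | a4 φ ψ => rw [gammaEval_imp_eq_unit_iff]; simp only [gammaEval]; grind

theorem gammaEval_of_isRPLAxiom (hu : 0 ≤ u) (hv : ∀ n, v n ∈ Set.Icc 0 u) (h : IsRPLAxiom φ) :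
    gammaEval u v φ = u := by
  cases h with
  | luk h => exact gammaEval_of_isLukAxiom hu hv h
  | book_imp q r =>
    apply gammaEval_eqv_of_eq hu
    have hmono : Monotone fun s : ℚ => s • u := fun _ _ h => smul_le_smul_of_nonneg_right h hu
    calc min u (u - q.1 • u + r.1 • u) = min ((1 : ℚ) • u) ((1 - q.1 + r.1) • u) := by
          rw [add_smul, sub_smul, one_smul]
      _ = min 1 (1 - q.1 + r.1) • u := hmono.map_min.symm
  | book_neg q =>
    apply gammaEval_eqv_of_eq hu
    simp only [gammaEval, UQ.lneg, sub_smul, one_smul]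
  | book_one => exact gammaEval_const_one
  | book_zero => rw [gammaEval, gammaEval_const_zero, sub_zero]

theorem RPLProv.gammaEval_eq_unit {Γ : Set Fml} (hu : 0 ≤ u) (hv : ∀ n, v n ∈ Set.Icc 0 u)
    (hΓ : ∀ ψ ∈ Γ, gammaEval u v ψ = u) (h : RPLProv Γ φ) : gammaEval u v φ = u := by
  refine h.induction (fun _ => gammaEval_of_isRPLAxiom hu hv) hΓ fun χ θ hχ hχθ => ?_
  rw [gammaEval_imp_eq_unit_iff, hχ] at hχθ
  exact (gammaEval_mem_Icc hu hv θ).2.antisymm hχθ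

end Soundness

/-! ### Lindenbaum algebras of Łukasiewicz logic -/

/-- Formulas of the language of Ł, as a type. -/
abbrev LFml := {φ : Fml // IsLFml φ}

namespace LFml

/-- The implication of two formulas of Ł. -/
def imp (a b : LFml) : LFml := ⟨a.1.imp b.1, .imp a.2 b.2⟩

/-- The negation of a formula of Ł. -/
def neg (a : LFml) : LFml := ⟨a.1.neg, .neg a.2⟩

/-- Provability in Ł of a formula of the language of Ł. -/
def Provable (T : Set Fml) (a : LFml) : Prop := LukProv T a.1

variable {T : Set Fml} {a b c : LFml}

theorem Provable.mp (ha : Provable T a) (hab : Provable T (a.imp b)) : Provable T b :=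
  LukProv.mp ha hab

theorem provable_imp_imp_left (a b : LFml) : Provable T (a.imp (b.imp a)) :=
  .ax (.a1 _ _) (a.imp (b.imp a)).2

theorem provable_suffixing (a b c : LFml) :
    Provable T ((a.imp b).imp ((b.imp c).imp (a.imp c))) :=
  .ax (.a2 _ _ _) ((a.imp b).imp ((b.imp c).imp (a.imp c))).2

theorem provable_imp_imp_comm (a b : LFml) :
    Provable T (((a.imp b).imp b).imp ((b.imp a).imp a)) :=
  .ax (.a3 _ _) (((a.imp b).imp b).imp ((b.imp a).imp a)).2

theorem provable_imp_of_neg_imp_neg (a b : LFml) :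
    Provable T ((a.neg.imp b.neg).imp (b.imp a)) :=
  .ax (.a4 _ _) ((a.neg.imp b.neg).imp (b.imp a)).2

theorem Provable.imp (hb : Provable T b) (a : LFml) : Provable T (a.imp b) :=
  hb.mp (provable_imp_imp_left b a)

theorem Provable.trans (hab : Provable T (a.imp b)) (hbc : Provable T (b.imp c)) :
    Provable T (a.imp c) :=
  hbc.mp (hab.mp (provable_suffixing a b c))

theorem provable_assertion (a b : LFml) : Provable T (a.imp ((a.imp b).imp b)) :=
  (provable_imp_imp_left a (b.imp a)).trans (provable_imp_imp_comm b a)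

theorem provable_permutation (a b c : LFml) :
    Provable T ((a.imp (b.imp c)).imp (b.imp (a.imp c))) :=
  (provable_suffixing a (b.imp c) c).trans
    ((provable_assertion b c).mp (provable_suffixing _ _ _))

theorem Provable.of_imp_of_left (hb : Provable T b) (h : Provable T (a.imp (b.imp c))) :
    Provable T (a.imp c) :=
  hb.mp (h.mp (provable_permutation a b c))

theorem provable_verum : Provable T ⟨.const 1, .one⟩ := LukProv.one

theorem provable_neg_falsum : Provable T (neg ⟨.const 0, .zero⟩) := LukProv.negzero

theorem provable_imp_self (a : LFml) : Provable T (a.imp a) :=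
  provable_verum.of_imp_of_left (provable_imp_imp_left a _)

theorem provable_prefixing (a b c : LFml) :
    Provable T ((b.imp c).imp ((a.imp b).imp (a.imp c))) :=
  (provable_suffixing a b c).mp (provable_permutation _ _ _)

theorem provable_of_neg_neg (a : LFml) : Provable T (a.neg.neg.imp a) := by
  let verum : LFml := ⟨.const 1, .one⟩
  have h : Provable T (a.neg.neg.imp (a.neg.imp verum.neg)) :=
    (provable_imp_imp_left a.neg.neg verum.neg.neg).trans
      (provable_imp_of_neg_imp_neg verum.neg a.neg)
  exact provable_verum.of_imp_of_left (h.trans (provable_imp_of_neg_imp_neg a verum))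

theorem provable_neg_neg (a : LFml) : Provable T (a.imp a.neg.neg) :=
  (provable_of_neg_neg a.neg).mp (provable_imp_of_neg_imp_neg _ _)

theorem provable_contraposition (a b : LFml) : Provable T ((a.imp b).imp (b.neg.imp a.neg)) :=
  have hleft : Provable T ((a.imp b).imp (a.neg.neg.imp b)) :=
    (provable_of_neg_neg a).mp (provable_suffixing _ _ _)
  have hright : Provable T ((a.neg.neg.imp b).imp (a.neg.neg.imp b.neg.neg)) :=
    (provable_neg_neg b).mp (provable_prefixing _ _ _)
  (hleft.trans hright).trans (provable_imp_of_neg_imp_neg _ _)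

/-- Provable equivalence of formulas of Ł over the theory `T`. -/
def provableEquiv (T : Set Fml) : Setoid LFml where
  r a b := Provable T (a.imp b) ∧ Provable T (b.imp a)
  iseqv :=
    { refl := fun a => ⟨provable_imp_self a, provable_imp_self a⟩
      symm := And.symm
      trans := fun hab hbc => ⟨hab.1.trans hbc.1, hbc.2.trans hab.2⟩ }

end LFml

open LFml

/-- The Lindenbaum algebra of a theory of Ł: formulas modulo provable equivalence. -/
def Lindenbaum (T : Set Fml) : Type := Quotient (provableEquiv T)

namespace Lindenbaum

variable {T : Set Fml} {a b : LFml}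

/-- The class of a formula in the Lindenbaum algebra of `T`. -/
def mk (T : Set Fml) (a : LFml) : Lindenbaum T := Quotient.mk (provableEquiv T) a

theorem mk_eq_mk_iff : mk T a = mk T b ↔ Provable T (a.imp b) ∧ Provable T (b.imp a) :=
  Quotient.eq

theorem mk_eq_mk_iff_of_provable (hb : Provable T b) : mk T a = mk T b ↔ Provable T a :=
  mk_eq_mk_iff.trans ⟨fun h => hb.mp h.2, fun ha => ⟨hb.imp a, ha.imp b⟩⟩

/-- The operation of the Lindenbaum algebra induced by implication. -/
def imp : Lindenbaum T → Lindenbaum T → Lindenbaum T :=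
  Quotient.map₂ LFml.imp fun a a' ha b b' hb =>
    ⟨(ha.2.mp (provable_suffixing a' a b)).trans (hb.1.mp (provable_prefixing a' b b')),
      (ha.1.mp (provable_suffixing a a' b')).trans (hb.2.mp (provable_prefixing a b' b))⟩

instance : Compl (Lindenbaum T) where
  compl := Quotient.map LFml.neg fun a a' ha =>
    ⟨ha.2.mp (provable_contraposition a' a), ha.1.mp (provable_contraposition a a')⟩

instance : Zero (Lindenbaum T) := ⟨mk T ⟨.const 0, .zero⟩⟩

instance : Add (Lindenbaum T) := ⟨fun x y => imp xᶜ y⟩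

theorem add_def (x y : Lindenbaum T) : x + y = imp xᶜ y := rfl

theorem imp_left_comm (x y z : Lindenbaum T) : imp x (imp y z) = imp y (imp x z) :=
  Quotient.inductionOn₃ x y z fun a b c =>
    mk_eq_mk_iff.2 ⟨provable_permutation a b c, provable_permutation b a c⟩

theorem compl_imp_compl (x y : Lindenbaum T) : imp xᶜ yᶜ = imp y x :=
  Quotient.inductionOn₂ x y fun a b =>
    mk_eq_mk_iff.2 ⟨provable_imp_of_neg_imp_neg a b, provable_contraposition b a⟩

theorem imp_imp_comm (x y : Lindenbaum T) : imp (imp x y) y = imp (imp y x) x :=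
  Quotient.inductionOn₂ x y fun a b =>
    mk_eq_mk_iff.2 ⟨provable_imp_imp_comm a b, provable_imp_imp_comm b a⟩

protected theorem compl_compl (x : Lindenbaum T) : xᶜᶜ = x :=
  Quotient.inductionOn x fun a => mk_eq_mk_iff.2 ⟨provable_of_neg_neg a, provable_neg_neg a⟩

theorem compl_zero_imp (x : Lindenbaum T) : imp 0ᶜ x = x :=
  Quotient.inductionOn x fun a => mk_eq_mk_iff.2
    ⟨provable_neg_falsum.mp (provable_assertion _ a), provable_imp_imp_left a _⟩

theorem imp_compl_zero (x : Lindenbaum T) : imp x 0ᶜ = 0ᶜ :=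
  Quotient.inductionOn x fun a =>
    (mk_eq_mk_iff_of_provable provable_neg_falsum).2 (provable_neg_falsum.imp a)

protected theorem add_comm (x y : Lindenbaum T) : x + y = y + x := by
  rw [add_def, ← compl_imp_compl, Lindenbaum.compl_compl, add_def]

instance : MVAlgebra (Lindenbaum T) where
  add_assoc x y z := by
    rw [Lindenbaum.add_comm, Lindenbaum.add_comm y z]
    exact imp_left_comm zᶜ xᶜ y
  zero_add := compl_zero_imp
  add_zero x := by
    rw [Lindenbaum.add_comm]
    exact compl_zero_imp x
  add_comm := Lindenbaum.add_comm
  nsmul := nsmulRec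
  compl_compl := Lindenbaum.compl_compl
  add_compl_zero x := imp_compl_zero xᶜ
  compl_add_compl_add_comm x y := by
    simpa only [add_def, Lindenbaum.compl_compl] using imp_imp_comm x y

theorem mk_const_zero : mk T ⟨.const 0, .zero⟩ = 0 := rfl

theorem mk_neg (a : LFml) : mk T a.neg = (mk T a)ᶜ := rfl

theorem mk_imp (a b : LFml) : mk T (a.imp b) = (mk T a)ᶜ + mk T b := by
  rw [add_def, Lindenbaum.compl_compl]
  rfl

theorem mk_eq_one_iff : mk T a = 1 ↔ Provable T a :=
  mk_eq_mk_iff_of_provable provable_neg_falsum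

theorem mk_le_mk_iff : mk T a ≤ mk T b ↔ Provable T (a.imp b) := by
  rw [MVAlgebra.le_iff, ← mk_imp, mk_eq_one_iff]

theorem gammaEval_eq_of_isGammaHom {K : Type*} [AddCommGroup K] [LinearOrder K] [Module ℚ K]
    {u : K} {f : Lindenbaum T → K} (hf : IsGammaHom u f) (a : LFml) :
    gammaEval u (fun n => f (mk T ⟨.var n, .var n⟩)) a.1 = f (mk T a) := by
  obtain ⟨φ, hφ⟩ := a
  induction hφ with
  | var n => rfl
  | zero => rw [gammaEval_const_zero, mk_const_zero, hf.map_zero]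
  | one => rw [gammaEval_const_one, mk_eq_one_iff.2 provable_verum, hf.map_one]
  | @neg φ hφ ih => rw [gammaEval, ih, ← hf.map_compl, ← mk_neg]; rfl
  | @imp φ ψ hφ hψ ihφ ihψ =>
    rw [gammaEval, ihφ, ihψ, ← hf.map_compl, ← hf.map_add, ← mk_imp]; rfl

/-! ### Linear theories -/

open MVAlgebra

theorem exists_join_mk_eq_one_of_insert {g : LFml} {χ : Fml} (hT : ∀ ψ ∈ T, IsLFml ψ)
    (hag : join (mk T a) (mk T g) = 1) (h : LukProv (insert a.1 T) χ) :
    ∃ hχ : IsLFml χ, join (mk T ⟨χ, hχ⟩) (mk T g) = 1 := by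
  have of_provable {b : LFml} (hb : Provable T b) : join (mk T b) (mk T g) = 1 := by
    rw [mk_eq_one_iff.2 hb, one_join]
  induction h with
  | ax h hχ => exact ⟨hχ, of_provable (.ax h hχ)⟩
  | one => exact ⟨.one, of_provable .one⟩
  | negzero => exact ⟨.neg .zero, of_provable .negzero⟩
  | hyp h =>
    rcases h with rfl | h
    · exact ⟨a.2, hag⟩
    · exact ⟨hT _ h, of_provable (.hyp h)⟩
  | mp _ _ ihφ ihφψ =>
    obtain ⟨hφ, hφg⟩ := ihφ
    obtain ⟨_ | _ | _ | _ | ⟨_, hψ⟩, hφψg⟩ := ihφψ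
    exact ⟨hψ, join_eq_one_of_compl_add hφg (mk_imp ⟨_, hφ⟩ ⟨_, hψ⟩ ▸ hφψg)⟩

theorem provable_of_insert_of_insert {f : LFml} (hT : ∀ ψ ∈ T, IsLFml ψ)
    (hab : join (mk T a) (mk T b) = 1) (ha : LukProv (insert a.1 T) f.1)
    (hb : LukProv (insert b.1 T) f.1) : Provable T f := by
  obtain ⟨_, hfb⟩ := exists_join_mk_eq_one_of_insert hT hab ha
  rw [join_comm] at hfb
  obtain ⟨_, hff⟩ := exists_join_mk_eq_one_of_insert hT hfb hb
  rwa [join_self, mk_eq_one_iff] at hff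

end Lindenbaum

/-- Theories of Ł over which any two formulas are comparable, also called complete or prime. -/
def IsLinearTheory (T : Set Fml) : Prop :=
  ∀ a b : LFml, Provable T (a.imp b) ∨ Provable T (b.imp a)

/-- The Lindenbaum algebra of a consistent linear theory is an MV-chain. -/
abbrev Lindenbaum.mvChain {T : Set Fml} {f : LFml} (hT : IsLinearTheory T)
    (hf : ¬Provable T f) : MVChain (Lindenbaum T) where
  exists_pair_ne := ⟨mk T f, 1, mt mk_eq_one_iff.1 hf⟩
  le_total x y := Quotient.inductionOn₂ x y fun a b =>
    (hT a b).imp mk_le_mk_iff.2 mk_le_mk_iff.2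

theorem LukProv.mono {S T : Set Fml} {φ : Fml} (hST : S ⊆ T) (h : LukProv S φ) :
    LukProv T φ := by
  induction h with
  | ax h hφ => exact .ax h hφ
  | one => exact .one
  | negzero => exact .negzero
  | hyp h => exact .hyp (hST h)
  | mp _ _ ihφ ihφψ => exact .mp ihφ ihφψ

theorem LukProv.exists_mem_of_sUnion {c : Set (Set Fml)} {φ : Fml} (hc : IsChain (· ⊆ ·) c)
    (hne : c.Nonempty) (h : LukProv (⋃₀ c) φ) : ∃ T ∈ c, LukProv T φ := by
  induction h with
  | ax h hφ => exact hne.imp fun T hT => ⟨hT, .ax h hφ⟩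
  | one => exact hne.imp fun T hT => ⟨hT, .one⟩
  | negzero => exact hne.imp fun T hT => ⟨hT, .negzero⟩
  | hyp h => exact h.imp fun T hT => ⟨hT.1, .hyp hT.2⟩
  | mp _ _ ihφ ihφψ =>
    obtain ⟨S, hS, hφ⟩ := ihφ
    obtain ⟨T, hT, hφψ⟩ := ihφψ
    rcases hc.total hS hT with hST | hTS
    · exact ⟨T, hT, .mp (hφ.mono hST) hφψ⟩
    · exact ⟨S, hS, .mp hφ (hφψ.mono hTS)⟩

theorem exists_maximal_not_provable {Γ : Set Fml} {f : LFml} (hΓ : ∀ ψ ∈ Γ, IsLFml ψ)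
    (hf : ¬Provable Γ f) :
    ∃ T, Γ ⊆ T ∧ Maximal (fun S => (∀ ψ ∈ S, IsLFml ψ) ∧ ¬Provable S f) T := by
  refine zorn_subset_nonempty {S | (∀ ψ ∈ S, IsLFml ψ) ∧ ¬Provable S f} ?_ Γ ⟨hΓ, hf⟩
  refine fun c hcS hc hne => ⟨⋃₀ c, ⟨?_, fun h => ?_⟩, fun _ => Set.subset_sUnion_of_mem⟩
  · rintro ψ ⟨S, hS, hψ⟩
    exact (hcS hS).1 ψ hψ
  · obtain ⟨S, hS, hSf⟩ := h.exists_mem_of_sUnion hc hne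
    exact (hcS hS).2 hSf

theorem isLinearTheory_of_maximal {T : Set Fml} {f : LFml}
    (hT : Maximal (fun S => (∀ ψ ∈ S, IsLFml ψ) ∧ ¬Provable S f) T) : IsLinearTheory T := by
  have insert_proves (a : LFml) (ha : ¬Provable T a) : LukProv (insert a.1 T) f.1 := by
    by_contra hf
    have hle := hT.le_of_ge ⟨Set.forall_mem_insert.2 ⟨a.2, hT.prop.1⟩, hf⟩ (Set.subset_insert _ _)
    exact ha (.hyp (hle (Set.mem_insert _ _)))
  intro a b
  by_contra! h
  refine hT.prop.2 (Lindenbaum.provable_of_insert_of_insert hT.prop.1 ?_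
    (insert_proves _ h.1) (insert_proves _ h.2))
  simpa only [Lindenbaum.mk_imp] using MVAlgebra.join_compl_add_compl_add _ _

/-- propositional RPL is a conservative expansion of propositional
Łukasiewicz logic: for every set `Γ ∪ {φ}` of formulas of the language of Ł (containing
no rational constants other than `0̄` and `1̄`), `Γ ⊢_RPL φ` iff `Γ ⊢_Ł φ`. -/
theorem rpl_conservative_over_luk (Γ : Set Fml) (φ : Fml)
    (hΓ : ∀ ψ ∈ Γ, IsLFml ψ) (hφ : IsLFml φ) :
    RPLProv Γ φ ↔ LukProv Γ φ := by
  refine ⟨fun hRPL => ?_, LukProv.toRPLProv⟩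
  let a : LFml := ⟨φ, hφ⟩
  by_contra hΓφ
  obtain ⟨T, hΓT, hT⟩ := exists_maximal_not_provable (f := a) hΓ hΓφ
  have hTa : ¬Provable T a := hT.prop.2
  let _ : MVChain (Lindenbaum T) := Lindenbaum.mvChain (isLinearTheory_of_maximal hT) hTa
  obtain ⟨u, f, hinj, hf⟩ := MVChain.exists_injective_isGammaHom (Lindenbaum T)
  have hv (n : ℕ) : f (.mk T ⟨.var n, .var n⟩) ∈ Set.Icc 0 u := ⟨hf.nonneg _, hf.le_unit _⟩
  have hu : 0 ≤ u := hf.map_one ▸ hf.nonneg 1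
  have hΓu : ∀ ψ ∈ Γ, gammaEval u (fun n => f (.mk T ⟨.var n, .var n⟩)) ψ = u := fun ψ hψ => by
    have hψ₁ : Lindenbaum.mk T ⟨ψ, hΓ ψ hψ⟩ = 1 := Lindenbaum.mk_eq_one_iff.2 (.hyp (hΓT hψ))
    rw [Lindenbaum.gammaEval_eq_of_isGammaHom hf ⟨ψ, hΓ ψ hψ⟩, hψ₁, hf.map_one]
  have hau : f (.mk T a) = u :=
    (Lindenbaum.gammaEval_eq_of_isGammaHom hf a).symm.trans (hRPL.gammaEval_eq_unit hu hv hΓu)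
  exact hTa <| Lindenbaum.mk_eq_one_iff.1 <| hinj <| hau.trans hf.map_one.symm
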